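/- Let S₁, S₂ ⊆ ℝ^n be closed convex sets whose relative interiors intersect (ri(S₁) ∩ ri(S₂) ≠ ∅), let u ∈ ℝ^n, let η ∈ (0, 2), and let ξ(0) ∈ ℝ^n be arbitrary. Define the iteration z(k) = proj_{S₁}((1/2)ξ(k) + (1/2)u) and ξ(k+1) = ξ(k) + η(proj_{S₂}(2z(k) − ξ(k)) − z(k)). Then the sequence (z(k))_{k∈ℕ} converges to proj_{S₁ ∩ S₂}(u), the metric projection of u onto S₁ ∩ S₂. -/

import Mathlib

/-!
The optimality condition for the projection `p` of `u` onto `S₁ ∩ S₂` says that `u - p` is normal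
to `S₁ ∩ S₂` at `p`. The relative interior condition splits this vector as `u - p = a + b` with `a`
normal to `S₁` and `b` normal to `S₂`: a Lagrange multiplier, i.e. a subgradient at `0` of the
perturbation function `d ↦ inf {⟪u - p, p - x⟫ | x ∈ S₁, y ∈ S₂, x - y = d}`. The splitting makes
`ξ' = p - b` a fixed point of the iteration, with shadow `p`. Firm nonexpansiveness of both
projections then gives `‖ξ (k + 1) - ξ'‖² + 2η ‖z k - p‖² ≤ ‖ξ k - ξ'‖²`, where the gain
`2η ‖z k - p‖²` comes from the strong convexity of `‖· - u‖²`; hence `z k → p`.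
-/

open Filter Set Topology
open scoped InnerProductSpace Pointwise

theorem tendsto_zero_of_succ_add_le {a b : ℕ → ℝ} (ha : ∀ k, 0 ≤ a k) (hb : ∀ k, 0 ≤ b k)
    (h : ∀ k, a (k + 1) + b k ≤ a k) : Tendsto b atTop (𝓝 0) := by
  have a_antitone : Antitone a := antitone_nat_of_succ_le fun k ↦ by linarith [h k, hb k]
  have a_tendsto := tendsto_atTop_ciInf a_antitone ⟨0, forall_mem_range.2 ha⟩
  have diff_tendsto := a_tendsto.sub (a_tendsto.comp (tendsto_add_atTop_nat 1))
  rw [sub_self] at diff_tendsto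
  exact squeeze_zero hb (fun k ↦ le_sub_iff_add_le'.2 (h k)) diff_tendsto

section Multiplier

theorem exists_linearMap_le_of_isLeast {V : Type*} [AddCommGroup V] [Module ℝ V]
    {A : Set (V × ℝ)} (hA : Convex ℝ A) (h_least : IsLeast {r | ((0 : V), r) ∈ A} 0)
    (h_absorb : ∀ d, ∃ t : ℝ, 0 < t ∧ ∃ r, (t • d, r) ∈ A) :
    ∃ φ : V →ₗ[ℝ] ℝ, ∀ v ∈ A, φ v.1 ≤ v.2 := by
  let K : PointedCone ℝ (V × ℝ) :=
    (ConvexCone.hull ℝ A).toPointedCone (ConvexCone.subset_hull h_least.1)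
  have mem_K {v : V × ℝ} : v ∈ K ↔ ∃ t : ℝ, 0 < t ∧ v ∈ t • A :=
    ConvexCone.mem_hull_of_convex hA
  let f : V × ℝ →ₗ.[ℝ] ℝ := (LinearMap.snd ℝ V ℝ).toPMap (Submodule.prod ⊥ ⊤)
  have f_nonneg : ∀ v : f.domain, (v : V × ℝ) ∈ K → 0 ≤ f v := by
    rintro ⟨⟨d₀, s⟩, hd₀⟩ hv
    obtain rfl : d₀ = 0 := hd₀.1
    obtain ⟨t, ht, ⟨d, r⟩, hdr, h_eq⟩ := mem_K.1 hv
    obtain ⟨rfl, rfl⟩ : d = 0 ∧ t * r = s := by simpa [ht.ne'] using h_eq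
    exact mul_nonneg ht.le (h_least.2 hdr)
  have f_dense : ∀ v, ∃ w : f.domain, (w : V × ℝ) + v ∈ K := by
    rintro ⟨d, s⟩
    obtain ⟨t, ht, r, hdr⟩ := h_absorb d
    refine ⟨⟨(0, t⁻¹ * r - s), rfl, trivial⟩, mem_K.2 ⟨t⁻¹, inv_pos.2 ht, _, hdr, ?_⟩⟩
    simp [inv_smul_smul₀ ht.ne']
  obtain ⟨g, g_eq, g_nonneg⟩ := riesz_extension K f f_nonneg f_dense
  refine ⟨-g ∘ₗ LinearMap.inl ℝ V ℝ, fun ⟨d, r⟩ hdr ↦ ?_⟩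
  have g_zero_right : g (0, r) = r := g_eq ⟨(0, r), rfl, trivial⟩
  have g_split : g (d, r) = g (d, 0) + g (0, r) := by simp [← map_add]
  have := g_nonneg _ (ConvexCone.subset_hull hdr)
  simp only [LinearMap.comp_apply, LinearMap.neg_apply, LinearMap.inl_apply]
  linarith

theorem eventually_smul_vadd_mem_of_mem_intrinsicInterior {𝕜 V P : Type*} [Ring 𝕜]
    [TopologicalSpace 𝕜] [AddCommGroup V] [Module 𝕜 V] [TopologicalSpace V] [ContinuousSMul 𝕜 V]
    [TopologicalSpace P] [AddTorsor V P] [ContinuousVAdd V P] {S : Set P} {c : P}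
    (hc : c ∈ intrinsicInterior 𝕜 S) {v : V} (hv : v ∈ vectorSpan 𝕜 S) :
    ∀ᶠ t : 𝕜 in 𝓝 0, t • v +ᵥ c ∈ S := by
  obtain ⟨c, hc_interior, rfl⟩ := mem_intrinsicInterior.1 hc
  have mem_span (t : 𝕜) : t • v +ᵥ (c : P) ∈ affineSpan 𝕜 S :=
    AffineSubspace.vadd_mem_of_mem_direction
      (Submodule.smul_mem _ t (direction_affineSpan 𝕜 S ▸ hv)) c.2
  let line (t : 𝕜) : affineSpan 𝕜 S := ⟨t • v +ᵥ (c : P), mem_span t⟩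
  have line_continuous : Continuous line := by fun_prop
  have line_zero : line 0 = c := by ext; simp [line]
  exact line_continuous.tendsto' 0 c line_zero (mem_interior_iff_mem_nhds.1 hc_interior)

variable {E : Type*} [AddCommGroup E] [Module ℝ E] [TopologicalSpace E] [ContinuousAdd E]
  [ContinuousSMul ℝ E] {S T : Set E}

theorem exists_pos_smul_mem_sub {c : E} (hcS : c ∈ intrinsicInterior ℝ S)
    (hcT : c ∈ intrinsicInterior ℝ T) {d : E} (hd : d ∈ vectorSpan ℝ S ⊔ vectorSpan ℝ T) :
    ∃ t : ℝ, 0 < t ∧ t • d ∈ S - T := by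
  obtain ⟨v, hv, w, hw, rfl⟩ := Submodule.mem_sup.1 hd
  have eventually_mem := (eventually_smul_vadd_mem_of_mem_intrinsicInterior hcS hv).and
    (eventually_smul_vadd_mem_of_mem_intrinsicInterior hcT (neg_mem hw))
  obtain ⟨t, ⟨htS, htT⟩, ht⟩ :=
    ((eventually_mem.filter_mono nhdsWithin_le_nhds).and (self_mem_nhdsWithin (s := Ioi 0))).exists
  refine ⟨t, ht, _, htS, _, htT, ?_⟩
  simp only [vadd_eq_add]
  module

theorem exists_linearMap_sub_le_of_inter (hS : Convex ℝ S) (hT : Convex ℝ T)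
    (hri : (intrinsicInterior ℝ S ∩ intrinsicInterior ℝ T).Nonempty) (f : E →ₗ[ℝ] ℝ) {p : E}
    (hp : p ∈ S ∩ T) (hf : ∀ x ∈ S ∩ T, f x ≤ f p) :
    ∃ ψ : E →ₗ[ℝ] ℝ, ∀ x ∈ S, ∀ y ∈ T, f (x - p) ≤ ψ (x - y) := by
  obtain ⟨c, hcS, hcT⟩ := hri
  let L : Submodule ℝ E := vectorSpan ℝ S ⊔ vectorSpan ℝ T
  have sub_mem_L {x y : E} (hx : x ∈ S) (hy : y ∈ T) : x - y ∈ L := by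
    rw [← sub_add_sub_cancel x c y]
    exact Submodule.add_mem_sup (vsub_mem_vectorSpan ℝ hx (intrinsicInterior_subset hcS))
      (vsub_mem_vectorSpan ℝ (intrinsicInterior_subset hcT) hy)
  let A : Set (L × ℝ) := {v | ∃ x ∈ S, ∃ y ∈ T, (v.1 : E) = x - y ∧ v.2 = f p - f x}
  have A_convex : Convex ℝ A := by
    rintro ⟨d, r⟩ ⟨x, hx, y, hy, hd, rfl⟩ ⟨d', r'⟩ ⟨x', hx', y', hy', hd', rfl⟩ a b ha hb hab
    refine ⟨_, hS hx hx' ha hb hab, _, hT hy hy' ha hb hab, ?_, ?_⟩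
    · simp only at hd hd'
      simp only [Prod.fst_add, Prod.smul_fst, Submodule.coe_add, Submodule.coe_smul, hd, hd']
      module
    · simp only [Prod.snd_add, Prod.smul_snd, smul_eq_mul, map_add, map_smul]
      linear_combination f p * hab
  have A_least : IsLeast {r | ((0 : L), r) ∈ A} 0 := by
    refine ⟨⟨p, hp.1, p, hp.2, by simp⟩, ?_⟩
    rintro r ⟨x, hx, y, hy, hxy, rfl⟩
    obtain rfl : x = y := sub_eq_zero.1 hxy.symm
    exact sub_nonneg.2 (hf x ⟨hx, hy⟩)
  have A_absorb (d : L) : ∃ t : ℝ, 0 < t ∧ ∃ r, (t • d, r) ∈ A := by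
    obtain ⟨t, ht, x, hx, y, hy, hxy⟩ := exists_pos_smul_mem_sub hcS hcT d.2
    exact ⟨t, ht, _, x, hx, y, hy, hxy.symm, rfl⟩
  obtain ⟨φ, hφ⟩ := exists_linearMap_le_of_isLeast A_convex A_least A_absorb
  obtain ⟨ψ, rfl⟩ := φ.exists_extend
  refine ⟨-ψ, fun x hx y hy ↦ ?_⟩
  have : ψ (x - y) ≤ f p - f x :=
    hφ (⟨x - y, sub_mem_L hx hy⟩, f p - f x) ⟨x, hx, y, hy, rfl, rfl⟩
  rw [map_sub, LinearMap.neg_apply]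
  linarith

end Multiplier

/-- `p` is a point of `S` closest to `x`. For a closed convex set in a Hilbert space this says that
`p` is the metric projection of `x` onto `S`. -/
def IsNearestPoint {X : Type*} [Dist X] (S : Set X) (x p : X) : Prop :=
  p ∈ S ∧ ∀ y ∈ S, dist x p ≤ dist x y

theorem exists_isNearestPoint {X : Type*} [PseudoMetricSpace X] [ProperSpace X] {S : Set X}
    (hS : IsClosed S) (hS_nonempty : S.Nonempty) (x : X) : ∃ p, IsNearestPoint S x p := by
  obtain ⟨p, hp, hp_dist⟩ := hS.exists_infDist_eq_dist hS_nonempty x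
  exact ⟨p, hp, fun y hy ↦ hp_dist ▸ Metric.infDist_le_dist_of_mem hy⟩

section InnerProductSpace

variable {E : Type*} [NormedAddCommGroup E] [InnerProductSpace ℝ E] {S T : Set E} {p : E}

/-- The normal cone `N_S(p)` of convex analysis, with dual vectors represented by the inner product.
It is defined for every `p`, also outside `S`, where it is usually declared to be empty. -/
def normalCone (S : Set E) (p : E) : Set E :=
  {v | ∀ x ∈ S, ⟪v, x - p⟫_ℝ ≤ 0}

theorem normalCone_inter [FiniteDimensional ℝ E] (hS : Convex ℝ S) (hT : Convex ℝ T)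
    (hri : (intrinsicInterior ℝ S ∩ intrinsicInterior ℝ T).Nonempty) (hp : p ∈ S ∩ T) :
    normalCone (S ∩ T) p = normalCone S p + normalCone T p := by
  refine Subset.antisymm (fun g hg ↦ ?_) ?_
  · have inner_le : ∀ x ∈ S ∩ T, innerₛₗ ℝ g x ≤ innerₛₗ ℝ g p := fun x hx ↦ by
      simpa [inner_sub_right] using hg x hx
    obtain ⟨ψ, hψ⟩ := exists_linearMap_sub_le_of_inter hS hT hri (innerₛₗ ℝ g) hp inner_le
    obtain ⟨b, rfl⟩ : ∃ b, innerₛₗ ℝ b = ψ :=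
      ⟨(InnerProductSpace.toDual ℝ E).symm ψ.toContinuousLinearMap, by ext; simp⟩
    simp only [innerₛₗ_apply_apply] at hψ
    refine ⟨g - b, fun x hx ↦ ?_, b, fun y hy ↦ ?_, sub_add_cancel g b⟩
    · rw [inner_sub_left]
      exact sub_nonpos.2 (hψ x hx p hp.2)
    · simpa [inner_sub_right] using hψ p hp.1 y hy
  · rintro _ ⟨a, ha, b, hb, rfl⟩ x hx
    rw [inner_add_left]
    exact add_nonpos (ha x hx.1) (hb x hx.2)

theorem isNearestPoint_iff_sub_mem_normalCone (hS : Convex ℝ S) {x : E} :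
    IsNearestPoint S x p ↔ p ∈ S ∧ x - p ∈ normalCone S p := by
  refine and_congr_right fun hp ↦ ?_
  have : Nonempty S := ⟨p, hp⟩
  have bdd : BddBelow (range fun y : S ↦ ‖x - y‖) :=
    ⟨0, forall_mem_range.2 fun y ↦ norm_nonneg (x - y)⟩
  simp only [normalCone, mem_ofPred_eq, ← norm_eq_iInf_iff_real_inner_le_zero hS hp, dist_eq_norm]
  exact ⟨fun h ↦ le_antisymm (le_ciInf fun y ↦ h y y.2) (ciInf_le bdd ⟨p, hp⟩),
    fun h y hy ↦ h.le.trans (ciInf_le bdd ⟨y, hy⟩)⟩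

theorem IsNearestPoint.norm_sub_sq_le_inner (hS : Convex ℝ S) {x y q : E}
    (hp : IsNearestPoint S x p) (hq : IsNearestPoint S y q) :
    ‖p - q‖ ^ 2 ≤ ⟪x - y, p - q⟫_ℝ := by
  rw [isNearestPoint_iff_sub_mem_normalCone hS] at hp hq
  have inner_p := hp.2 q hq.1
  have inner_q := hq.2 p hp.1
  rw [← real_inner_self_eq_norm_sq]
  simp only [inner_sub_left, inner_sub_right] at inner_p inner_q ⊢
  linarith

theorem norm_add_smul_sub_sq_add (η : ℝ) (x z w : E) :
    ‖x + η • (w - z)‖ ^ 2 + 2 * η * ‖z‖ ^ 2 = ‖x‖ ^ 2 - 4 * η * (⟪(2 : ℝ)⁻¹ • x, z⟫_ℝ - ‖z‖ ^ 2)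
      - 2 * η * (⟪(2 : ℝ) • z - x, w⟫_ℝ - ‖w‖ ^ 2) - η * (2 - η) * ‖w - z‖ ^ 2 := by
  simp only [← real_inner_self_eq_norm_sq, inner_add_left, inner_add_right, inner_sub_left,
    inner_sub_right, real_inner_smul_left, real_inner_smul_right, real_inner_comm x,
    real_inner_comm z w]
  ring

/-- One evaluation of the two projections in the Douglas–Rachford iteration for the best
approximation of `u` in `S₁ ∩ S₂`: `z` projects `(ξ + u) / 2` onto `S₁`, and `w` projects the
reflected point `2 z - ξ` onto `S₂`. -/
structure IsDouglasRachfordStep (S₁ S₂ : Set E) (u ξ z w : E) : Prop where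
  isNearestPoint_left : IsNearestPoint S₁ ((2 : ℝ)⁻¹ • ξ + (2 : ℝ)⁻¹ • u) z
  isNearestPoint_right : IsNearestPoint S₂ ((2 : ℝ) • z - ξ) w

variable {S₁ S₂ : Set E} {u : E} {η : ℝ}

theorem IsDouglasRachfordStep.norm_sq_add_le (hS₁ : Convex ℝ S₁) (hS₂ : Convex ℝ S₂)
    (hη₀ : 0 ≤ η) (hη₂ : η ≤ 2) {ξ z w ξ' z' w' : E} (h : IsDouglasRachfordStep S₁ S₂ u ξ z w)
    (h' : IsDouglasRachfordStep S₁ S₂ u ξ' z' w') :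
    ‖ξ + η • (w - z) - (ξ' + η • (w' - z'))‖ ^ 2 + 2 * η * ‖z - z'‖ ^ 2 ≤ ‖ξ - ξ'‖ ^ 2 := by
  have firm_left := h.isNearestPoint_left.norm_sub_sq_le_inner hS₁ h'.isNearestPoint_left
  have firm_right := h.isNearestPoint_right.norm_sub_sq_le_inner hS₂ h'.isNearestPoint_right
  have left_sub : (2 : ℝ)⁻¹ • ξ + (2 : ℝ)⁻¹ • u - ((2 : ℝ)⁻¹ • ξ' + (2 : ℝ)⁻¹ • u)
      = (2 : ℝ)⁻¹ • (ξ - ξ') := by module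
  have right_sub : (2 : ℝ) • z - ξ - ((2 : ℝ) • z' - ξ') = (2 : ℝ) • (z - z') - (ξ - ξ') := by
    module
  have next_sub : ξ + η • (w - z) - (ξ' + η • (w' - z'))
      = ξ - ξ' + η • ((w - w') - (z - z')) := by module
  rw [left_sub] at firm_left
  rw [right_sub] at firm_right
  rw [next_sub, norm_add_smul_sub_sq_add]
  have left_gain := mul_nonneg (mul_nonneg zero_le_four hη₀) (sub_nonneg.2 firm_left)
  have right_gain := mul_nonneg (mul_nonneg zero_le_two hη₀) (sub_nonneg.2 firm_right)
  have relaxation_gain := mul_nonneg (mul_nonneg hη₀ (sub_nonneg.2 hη₂))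
    (sq_nonneg ‖(w - w') - (z - z')‖)
  linarith

theorem IsNearestPoint.exists_isDouglasRachfordStep [FiniteDimensional ℝ E] (hS₁ : Convex ℝ S₁)
    (hS₂ : Convex ℝ S₂) (hri : (intrinsicInterior ℝ S₁ ∩ intrinsicInterior ℝ S₂).Nonempty)
    (hp : IsNearestPoint (S₁ ∩ S₂) u p) : ∃ ξ, IsDouglasRachfordStep S₁ S₂ u ξ p p := by
  rw [isNearestPoint_iff_sub_mem_normalCone (hS₁.inter hS₂)] at hp
  obtain ⟨⟨hp₁, hp₂⟩, hu⟩ := hp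
  rw [normalCone_inter hS₁ hS₂ hri ⟨hp₁, hp₂⟩] at hu
  obtain ⟨a, ha, b, hb, hab⟩ := hu
  refine ⟨p - b, (isNearestPoint_iff_sub_mem_normalCone hS₁).2 ⟨hp₁, fun x hx ↦ ?_⟩,
    (isNearestPoint_iff_sub_mem_normalCone hS₂).2 ⟨hp₂, ?_⟩⟩
  · have : (2 : ℝ)⁻¹ • (p - b) + (2 : ℝ)⁻¹ • u - p = (2 : ℝ)⁻¹ • a := by
      rw [eq_sub_of_add_eq hab]; module
    rw [this, real_inner_smul_left]
    exact mul_nonpos_of_nonneg_of_nonpos (by norm_num) (ha x hx)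
  · have : (2 : ℝ) • p - (p - b) - p = b := by module
    rwa [this]

theorem tendsto_of_isDouglasRachfordStep (hS₁ : Convex ℝ S₁) (hS₂ : Convex ℝ S₂) (hη₀ : 0 < η)
    (hη₂ : η ≤ 2) {ξ z w : ℕ → E} (hstep : ∀ k, IsDouglasRachfordStep S₁ S₂ u (ξ k) (z k) (w k))
    (hξ : ∀ k, ξ (k + 1) = ξ k + η • (w k - z k)) {ξ' : E}
    (hfix : IsDouglasRachfordStep S₁ S₂ u ξ' p p) : Tendsto z atTop (𝓝 p) := by
  have norm_sq_le (k : ℕ) : ‖ξ (k + 1) - ξ'‖ ^ 2 + 2 * η * ‖z k - p‖ ^ 2 ≤ ‖ξ k - ξ'‖ ^ 2 := by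
    simpa [hξ] using (hstep k).norm_sq_add_le hS₁ hS₂ hη₀.le hη₂ hfix
  have scaled_tendsto : Tendsto (fun k ↦ 2 * η * ‖z k - p‖ ^ 2) atTop (𝓝 0) :=
    tendsto_zero_of_succ_add_le (a := fun k ↦ ‖ξ k - ξ'‖ ^ 2) (fun k ↦ by positivity)
      (fun k ↦ by positivity) norm_sq_le
  have sq_tendsto : Tendsto (fun k ↦ ‖z k - p‖ ^ 2) atTop (𝓝 0) := by
    simpa only [inv_mul_cancel_left₀ (by positivity : 2 * η ≠ 0), mul_zero]
      using scaled_tendsto.const_mul (2 * η)⁻¹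
  simpa [tendsto_iff_norm_sub_tendsto_zero] using sq_tendsto.sqrt

theorem douglas_rachford_best_approximation_general [FiniteDimensional ℝ E]
    (hS₁ : Convex ℝ S₁) (hS₂ : Convex ℝ S₂)
    (hri : (intrinsicInterior ℝ S₁ ∩ intrinsicInterior ℝ S₂).Nonempty)
    (hp : IsNearestPoint (S₁ ∩ S₂) u p) (hη₀ : 0 < η) (hη₂ : η ≤ 2) {ξ z w : ℕ → E}
    (hstep : ∀ k, IsDouglasRachfordStep S₁ S₂ u (ξ k) (z k) (w k))
    (hξ : ∀ k, ξ (k + 1) = ξ k + η • (w k - z k)) : Tendsto z atTop (𝓝 p) :=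
  have ⟨_, hfix⟩ := hp.exists_isDouglasRachfordStep hS₁ hS₂ hri
  tendsto_of_isDouglasRachfordStep hS₁ hS₂ hη₀ hη₂ hstep hξ hfix

end InnerProductSpace

/-- Convergence of the Douglas–Rachford splitting for the best approximation
problem: if `S₁, S₂` are closed convex sets whose relative interiors
intersect, `η ∈ (0, 2)`, `P₁, P₂` are the metric projections onto `S₁, S₂`,
and the iterates satisfy `z k = P₁ ((1/2) ξ k + (1/2) u)` and
`ξ (k+1) = ξ k + η (P₂ (2 z k − ξ k) − z k)`, then `z k` converges to the
metric projection of `u` onto `S₁ ∩ S₂`. -/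
theorem douglas_rachford_best_approximation
    (n : ℕ)
    (S₁ S₂ : Set (EuclideanSpace ℝ (Fin n)))
    (hS₁cl : IsClosed S₁) (hS₁cvx : Convex ℝ S₁)
    (hS₂cl : IsClosed S₂) (hS₂cvx : Convex ℝ S₂)
    (hri : (intrinsicInterior ℝ S₁ ∩ intrinsicInterior ℝ S₂).Nonempty)
    (u : EuclideanSpace ℝ (Fin n))
    (η : ℝ) (hη₀ : 0 < η) (hη₂ : η < 2)
    (P₁ P₂ : EuclideanSpace ℝ (Fin n) → EuclideanSpace ℝ (Fin n))
    (hP₁ : ∀ x, P₁ x ∈ S₁ ∧ ∀ y ∈ S₁, dist x (P₁ x) ≤ dist x y)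
    (hP₂ : ∀ x, P₂ x ∈ S₂ ∧ ∀ y ∈ S₂, dist x (P₂ x) ≤ dist x y)
    (ξ z : ℕ → EuclideanSpace ℝ (Fin n))
    (hz : ∀ k, z k = P₁ ((2 : ℝ)⁻¹ • ξ k + (2 : ℝ)⁻¹ • u))
    (hξ : ∀ k, ξ (k + 1) = ξ k + η • (P₂ ((2 : ℝ) • z k - ξ k) - z k)) :
    ∃ p, p ∈ S₁ ∩ S₂ ∧ (∀ y ∈ S₁ ∩ S₂, dist u p ≤ dist u y) ∧
      Filter.Tendsto z Filter.atTop (nhds p) := by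
  obtain ⟨p, hp⟩ := exists_isNearestPoint (hS₁cl.inter hS₂cl)
    (hri.mono (Set.inter_subset_inter intrinsicInterior_subset intrinsicInterior_subset)) u
  exact ⟨p, hp.1, hp.2, douglas_rachford_best_approximation_general hS₁cvx hS₂cvx hri hp hη₀ hη₂.le
    (fun k ↦ ⟨hz k ▸ hP₁ _, hP₂ _⟩) hξ⟩
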